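/- Every reduced Gröbner basis G of the ideal ⟨𝓕⟩ ⊆ Z2[X] with respect to the degree lexicographic order ≼_deg satisfies |G| ≥ 2^(2^n) and moreover |{p ∈ G : deg(p) ≥ 2^(2^n)}| ≥ 2^(2^n), where deg(p) denotes the maximal total degree of a monomial occurring in p. -/

import Mathlib

open MvPolynomial

/-- Monomials in the variables `σ`, represented by their exponent vectors. -/
abbrev Mon (σ : Type*) := σ →₀ ℕ

/-- A monomial order: a total order on monomials such that `1 ≼ t` for every monomial `t`
and `t ≼ u → t·v ≼ u·v` (written additively on exponent vectors). -/
structure MonOrd (σ : Type*) where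
  le : Mon σ → Mon σ → Prop
  le_refl : ∀ t, le t t
  le_trans : ∀ t u v, le t u → le u v → le t v
  le_antisymm : ∀ t u, le t u → le u t → t = u
  le_total : ∀ t u, le t u ∨ le u t
  zero_le : ∀ t, le 0 t
  add_le_add : ∀ t u v, le t u → le (t + v) (u + v)

/-- Strict version of a monomial order. -/
def MonOrd.lt {σ : Type*} (μ : MonOrd σ) (t u : Mon σ) : Prop := μ.le t u ∧ t ≠ u

/-- The extension of a monomial order (given by the relation `r` on monomials) to polynomials:
`g ≼ f` iff `g = f` or the greatest monomial on which `f` and `g` differ occurs in `f`.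
(This is the closed form of the recursive definition: `g ≼ f` iff `g = f`, or
`HT g ≺ HT f`, or `HT g = HT f` and `g - HT g ≼ f - HT f`, with `0` the least polynomial.) -/
def polyLe {σ : Type*} (r : Mon σ → Mon σ → Prop) (g f : MvPolynomial σ (ZMod 2)) : Prop :=
  g = f ∨ ∃ t, t ∈ f.support ∧ t ∉ g.support ∧
    ∀ u : Mon σ, ((u ∈ f.support ∧ u ∉ g.support) ∨ (u ∈ g.support ∧ u ∉ f.support)) → r u t

/-- Strict extension of a monomial order to polynomials. -/
def polyLt {σ : Type*} (r : Mon σ → Mon σ → Prop) (g f : MvPolynomial σ (ZMod 2)) : Prop :=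
  polyLe r g f ∧ g ≠ f

/-- `S_F`: the set of non-residual polynomials with respect to `F` and the monomial order `r`,
i.e. those `f` admitting a `g` with `f + g ∈ ⟨F⟩` and `g ≺ f`. -/
def SF {σ : Type*} (r : Mon σ → Mon σ → Prop) (F : Set (MvPolynomial σ (ZMod 2))) :
    Set (MvPolynomial σ (ZMod 2)) :=
  {f | ∃ g, f + g ∈ Ideal.span F ∧ polyLt r g f}

/-- `t` is the head monomial (`r`-greatest monomial) of the polynomial `f`. -/
def IsHT {σ : Type*} (r : Mon σ → Mon σ → Prop) (f : MvPolynomial σ (ZMod 2)) (t : Mon σ) :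
    Prop :=
  t ∈ f.support ∧ ∀ u ∈ f.support, r u t

/-- `HT(S)`: the set of head monomials (as polynomials) of the nonzero elements of `S`. -/
def HTset {σ : Type*} (r : Mon σ → Mon σ → Prop) (S : Set (MvPolynomial σ (ZMod 2))) :
    Set (MvPolynomial σ (ZMod 2)) :=
  {p | ∃ f ∈ S, f ≠ 0 ∧ ∃ t, IsHT r f t ∧ p = monomial t 1}

/-- The divisibility (componentwise) order `◁` on monomials. -/
def triMon {σ : Type*} (t u : Mon σ) : Prop := ∀ x, t x ≤ u x

/-- The order `◁` on polynomials: `p ◁ q` iff there is an injective map `φ` from the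
monomials of `p` to the monomials of `q` with `t ◁ φ t` for each monomial `t` of `p`. -/
def triPoly {σ : Type*} (p q : MvPolynomial σ (ZMod 2)) : Prop :=
  ∃ φ : Mon σ → Mon σ, Set.InjOn φ ↑p.support ∧ ∀ t ∈ p.support, φ t ∈ q.support ∧ triMon t (φ t)

/-- Upward closure with respect to `◁`. -/
def upClo {σ : Type*} (A : Set (MvPolynomial σ (ZMod 2))) : Set (MvPolynomial σ (ZMod 2)) :=
  {q | ∃ p ∈ A, triPoly p q}

/-- `Min_◁(A)`: the `◁`-minimal elements of `A`. -/
def minTri {σ : Type*} (A : Set (MvPolynomial σ (ZMod 2))) : Set (MvPolynomial σ (ZMod 2)) :=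
  {p | p ∈ A ∧ ∀ q ∈ A, triPoly q p → q = p}

/-- `G` is a Gröbner basis of the ideal `I` with respect to the monomial order `r`. -/
def IsGB {σ : Type*} (r : Mon σ → Mon σ → Prop) (G : Finset (MvPolynomial σ (ZMod 2)))
    (I : Ideal (MvPolynomial σ (ZMod 2))) : Prop :=
  (↑G : Set (MvPolynomial σ (ZMod 2))) ⊆ ↑I ∧
    Ideal.span (↑G : Set (MvPolynomial σ (ZMod 2))) = I ∧
    Ideal.span (HTset r (↑I : Set (MvPolynomial σ (ZMod 2)))) = Ideal.span (HTset r ↑G)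

/-- `G` is a reduced Gröbner basis of `I` with respect to `r`. -/
def IsReducedGB {σ : Type*} (r : Mon σ → Mon σ → Prop) (G : Finset (MvPolynomial σ (ZMod 2)))
    (I : Ideal (MvPolynomial σ (ZMod 2))) : Prop :=
  IsGB r G I ∧ ∀ f ∈ G, ¬ ∀ t ∈ f.support,
    (monomial t 1 : MvPolynomial σ (ZMod 2)) ∈
      Ideal.span (HTset r ((↑G : Set (MvPolynomial σ (ZMod 2))) \ {f}))

/-- The variable set `X`: the special variables `s, ℓ, c, c̄, b, b̄` together with, for each
`0 ≤ i ≤ n`, the variables `s_i, f_i, q_{ji}, c_{ji}, b_{ji}` (`1 ≤ j ≤ 4`, encoded by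
`j : Fin 4`) and their barred copies (`bar = true`). -/
inductive MVar (n : ℕ) : Type where
  | vs | vl | vc | vcb | vb | vbb
  | vS (bar : Bool) (i : Fin (n+1))
  | vF (bar : Bool) (i : Fin (n+1))
  | vQ (bar : Bool) (j : Fin 4) (i : Fin (n+1))
  | vC (bar : Bool) (j : Fin 4) (i : Fin (n+1))
  | vB (bar : Bool) (j : Fin 4) (i : Fin (n+1))
deriving DecidableEq

open MVar

abbrev MPoly (n : ℕ) := MvPolynomial (MVar n) (ZMod 2)

/-- `e(n) = 2^(2^n)`. -/
def en (n : ℕ) : ℕ := 2 ^ 2 ^ n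

/-- The set `P_0` (barred copy if `bar = true`). -/
def P0 (n : ℕ) (bar : Bool) : Set (MPoly n) :=
  {p | ∃ j : Fin 4, p =
    X (vB bar j 0) ^ 2 * X (vC bar j 0) * X (vF bar 0) + X (vC bar j 0) * X (vS bar 0)}

/-- The set `P_m` for `m = i+1`, `i : Fin n` (barred copy if `bar = true`).
Here `i.succ` plays the role of `m` and `i.castSucc` the role of `m-1`; the indices
`1,2,3,4` of the paper are encoded as `0,1,2,3 : Fin 4`. -/
def Pm (n : ℕ) (bar : Bool) (i : Fin n) : Set (MPoly n) :=
  ({ X (vQ bar 0 i.succ) * X (vC bar 0 i.castSucc) * X (vS bar i.castSucc) + X (vS bar i.succ),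
    X (vQ bar 1 i.succ) * X (vC bar 1 i.castSucc) * X (vS bar i.castSucc)
      + X (vQ bar 0 i.succ) * X (vB bar 0 i.castSucc) * X (vC bar 0 i.castSucc)
        * X (vF bar i.castSucc),
    X (vQ bar 2 i.succ) * X (vC bar 2 i.castSucc) * X (vF bar i.castSucc)
      + X (vQ bar 1 i.succ) * X (vC bar 1 i.castSucc) * X (vF bar i.castSucc),
    X (vQ bar 2 i.succ) * X (vB bar 0 i.castSucc) * X (vC bar 2 i.castSucc)
        * X (vS bar i.castSucc)
      + X (vQ bar 1 i.succ) * X (vB bar 3 i.castSucc) * X (vC bar 1 i.castSucc)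
        * X (vS bar i.castSucc),
    X (vQ bar 3 i.succ) * X (vB bar 3 i.castSucc) * X (vC bar 3 i.castSucc)
        * X (vF bar i.castSucc)
      + X (vQ bar 2 i.succ) * X (vC bar 2 i.castSucc) * X (vS bar i.castSucc),
    X (vQ bar 3 i.succ) * X (vC bar 3 i.castSucc) * X (vS bar i.castSucc)
      + X (vF bar i.succ) } : Set (MPoly n))
  ∪ {p | ∃ j : Fin 4, p =
      X (vQ bar 1 i.succ) * X (vB bar 2 i.castSucc) * X (vB bar j i.succ) * X (vC bar j i.succ)
          * X (vF bar i.castSucc)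
        + X (vQ bar 1 i.succ) * X (vB bar 1 i.castSucc) * X (vC bar j i.succ)
          * X (vF bar i.castSucc)}

/-- The set `P = P_0 ∪ P_1 ∪ ⋯ ∪ P_n`; for `bar = true` this is the barred copy `P̄`
(the image of `P` under the substitution replacing each variable by its barred version). -/
def PP (n : ℕ) (bar : Bool) : Set (MPoly n) := P0 n bar ∪ ⋃ i : Fin n, Pm n bar i

/-- The set `G` of seven extra binomials. -/
def GG (n : ℕ) : Set (MPoly n) :=
  { X (vB false 3 (Fin.last n)) * X vl * X vb + X vl * X vc,
    X (vB false 3 (Fin.last n)) * X vl * X vbb + X vl * X vcb,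
    X (vC false 3 (Fin.last n)) * X (vF false (Fin.last n)) + X vl,
    X (vC true 3 (Fin.last n)) * X (vF true (Fin.last n))
      + X (vC false 3 (Fin.last n)) * X (vS false (Fin.last n)),
    X (vB true 3 (Fin.last n)) * X (vC false 3 (Fin.last n)) * X (vS false (Fin.last n))
      + X (vC false 3 (Fin.last n)) * X (vS false (Fin.last n)) * X vb,
    X (vB true 3 (Fin.last n)) * X (vC false 3 (Fin.last n)) * X (vS false (Fin.last n))
      + X (vC false 3 (Fin.last n)) * X (vS false (Fin.last n)) * X vbb,
    X (vC true 3 (Fin.last n)) * X (vS true (Fin.last n)) + X vs }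

/-- The set `𝓕 = P ∪ P̄ ∪ G`. -/
def FF (n : ℕ) : Set (MPoly n) := PP n false ∪ PP n true ∪ GG n

/-- The set `C = {ℓ c̄^{m1} c^{m2} : m1 + m2 = e(n)}` of monomials. -/
def Cmon (n : ℕ) : Set (Mon (MVar n)) :=
  {α | ∃ m1 m2 : ℕ, m1 + m2 = en n ∧
    α = Finsupp.single vl 1 + Finsupp.single vcb m1 + Finsupp.single vc m2}

/-- The set `D = {ℓ^j c̄^{m1} c^{m2} : j ∈ {0,1}, j + m1 + m2 ≤ e(n)}` of monomials. -/
def Dmon (n : ℕ) : Set (Mon (MVar n)) :=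
  {α | ∃ j m1 m2 : ℕ, j ≤ 1 ∧ j + m1 + m2 ≤ en n ∧
    α = Finsupp.single vl j + Finsupp.single vcb m1 + Finsupp.single vc m2}

/-- An injective rank function on the variables realizing the variable ordering
(from least to greatest): `s, c, c̄, ℓ, b, b̄`; then `s_0,…,s_n`; `f_0,…,f_n`;
`c_{10},…,c_{1n}; …; c_{40},…,c_{4n}`; `b_{10},…,b_{4n}`; `q_{10},…,q_{4n}`;
then the barred variables in the same pattern. -/
def vrank (n : ℕ) : MVar n → ℕ
  | .vs => 0
  | .vc => 1
  | .vcb => 2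
  | .vl => 3
  | .vb => 4
  | .vbb => 5
  | .vS bar i => 6 + (cond bar (14 * (n+1)) 0) + (i : ℕ)
  | .vF bar i => 6 + (cond bar (14 * (n+1)) 0) + (n+1) + (i : ℕ)
  | .vC bar j i => 6 + (cond bar (14 * (n+1)) 0) + 2*(n+1) + (j : ℕ)*(n+1) + (i : ℕ)
  | .vB bar j i => 6 + (cond bar (14 * (n+1)) 0) + 6*(n+1) + (j : ℕ)*(n+1) + (i : ℕ)
  | .vQ bar j i => 6 + (cond bar (14 * (n+1)) 0) + 10*(n+1) + (j : ℕ)*(n+1) + (i : ℕ)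

/-- The lexicographic monomial order on `X`: `t ≼_lex u` iff `t = u` or the exponents differ
somewhere and at the greatest variable (w.r.t. `vrank`) where they differ, the exponent of
`t` is smaller. -/
def lexLe (n : ℕ) (t u : Mon (MVar n)) : Prop :=
  t = u ∨ ∃ x : MVar n, t x < u x ∧ ∀ y : MVar n, vrank n x < vrank n y → t y = u y

/-- The total degree of a monomial. -/
def mdeg {σ : Type*} (t : Mon σ) : ℕ := t.sum fun _ k => k

/-- The degree lexicographic monomial order. -/
def degLexLe (n : ℕ) (t u : Mon (MVar n)) : Prop :=
  mdeg t < mdeg u ∨ (mdeg t = mdeg u ∧ lexLe n t u)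

/-- Weighted degree of a monomial with respect to a weight map `w`. -/
noncomputable def wdeg {n : ℕ} (w : MVar n → ℝ) (t : Mon (MVar n)) : ℝ :=
  t.sum fun x k => (k : ℝ) * w x

/-- The weighted monomial order determined by the weight map `w`. -/
def wLe {n : ℕ} (w : MVar n → ℝ) (t u : Mon (MVar n)) : Prop := t = u ∨ wdeg w t < wdeg w u



/-- Variables of one copy of the counter machine, with levels indexed by `ℕ`. -/
inductive LV : Type where
  | S (k : ℕ)
  | F (k : ℕ)
  | Q (k : ℕ) (j : Fin 4)
  | C (k : ℕ) (j : Fin 4)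
  | B (k : ℕ) (j : Fin 4)
deriving DecidableEq

namespace Mach

abbrev St := LV → ℕ

/-- All the variables belonging strictly below level `k` vanish. -/
def Low : ℕ → St → Prop
  | 0, _ => True
  | k+1, x => (x (.S k) = 0 ∧ x (.F k) = 0 ∧ (∀ j, x (.C k j) = 0) ∧ (∀ j, x (.B k j) = 0)
      ∧ ∀ j, x (.Q (k+1) j) = 0) ∧ Low k x

def Ok (j : Fin 4) (E : ℕ) (a : Fin 4 → ℕ) : Prop :=
  if j = 0 ∨ j = 3 then a 1 = 0 ∧ a 2 = 0 ∧ a 0 + a 3 = E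
  else a 1 + a 2 = E ∧ a 0 + a 3 + 1 = E

def One (j : Fin 4) (y : Fin 4 → ℕ) : Prop := ∀ i, y i = if i = j then 1 else 0

/-- `x` is a valid configuration of the level `k` machine, with selected counter `j`
and conserved value `V`. -/
def Val : ℕ → Fin 4 → ℕ → St → Prop
  | 0, j, V, x => One j (fun i => x (.C 0 i)) ∧
      ((x (.S 0) = 1 ∧ x (.F 0) = 0 ∧ V = x (.B 0 j) + en 0) ∨
       (x (.S 0) = 0 ∧ x (.F 0) = 1 ∧ V = x (.B 0 j)))
  | k+1, j, V, x => One j (fun i => x (.C (k+1) i)) ∧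
      ((x (.S (k+1)) = 1 ∧ x (.F (k+1)) = 0 ∧ Low (k+1) x ∧ V = x (.B (k+1) j) + en (k+1)) ∨
       (x (.S (k+1)) = 0 ∧ x (.F (k+1)) = 1 ∧ Low (k+1) x ∧ V = x (.B (k+1) j)) ∨
       (x (.S (k+1)) = 0 ∧ x (.F (k+1)) = 0 ∧ ∃ p v, One p (fun i => x (.Q (k+1) i)) ∧
          Val k p v x ∧ Ok p (en k) (Function.update (fun i => x (.B k i)) p v) ∧
          V = x (.B (k+1) j) + en k * (Function.update (fun i => x (.B k i)) p v) 0
            + (Function.update (fun i => x (.B k i)) p v) 1))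

lemma One.eq {j p : Fin 4} {y : Fin 4 → ℕ} (h : One j y) (hp : 1 ≤ y p) : j = p := by
  have := h p
  by_contra hne
  rw [if_neg (fun h => hne h.symm)] at this
  omega

lemma Val.one {k j V x} (h : Val k j V x) : One j (fun i => x (.C k i)) := by
  cases k <;> exact h.1

lemma Low.of_le {k m x} (hk : m ≤ k) (h : Low k x) : Low m x := by
  induction k with
  | zero => obtain rfl : m = 0 := by omega
            exact h
  | succ k ih =>
    rcases Nat.lt_or_ge m (k+1) with h1 | h1
    · exact ih (by omega) h.2
    · obtain rfl : m = k+1 := by omega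
      exact h

lemma Low.congr {k : ℕ} {x y : St} (hS : ∀ i < k, x (.S i) = y (.S i))
    (hF : ∀ i < k, x (.F i) = y (.F i)) (hC : ∀ i < k, ∀ j, x (.C i j) = y (.C i j))
    (hB : ∀ i < k, ∀ j, x (.B i j) = y (.B i j))
    (hQ : ∀ i ≤ k, ∀ j, x (.Q i j) = y (.Q i j)) : Low k x ↔ Low k y := by
  induction k with
  | zero => rfl
  | succ k ih =>
    simp only [Low, hS k (by omega), hF k (by omega), hC k (by omega), hB k (by omega),
      hQ (k+1) (by omega)]
    rw [ih (fun i hi => hS i (by omega)) (fun i hi => hF i (by omega))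
      (fun i hi => hC i (by omega)) (fun i hi => hB i (by omega)) (fun i hi => hQ i (by omega))]

lemma val_S {k j V x} (h : 1 ≤ x (.S k)) : Val k j V x ↔
    One j (fun i => x (.C k i)) ∧ x (.S k) = 1 ∧ x (.F k) = 0 ∧ Low k x ∧
      V = x (.B k j) + en k := by
  cases k with
  | zero => 
    simp only [Val, Low]
    constructor
    · rintro ⟨h1, ⟨h2, h3⟩ | ⟨h2, h3⟩⟩
      · exact ⟨h1, h2, h3.1, trivial, h3.2⟩
      · omega
    · rintro ⟨h1, h2, h3, -, h4⟩
      exact ⟨h1, Or.inl ⟨h2, h3, h4⟩⟩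
  | succ k =>
    rw [Val]
    constructor
    · rintro ⟨h1, h2 | ⟨h2, h3⟩ | ⟨h2, h3⟩⟩
      · exact ⟨h1, h2⟩
      · omega
      · omega
    · rintro ⟨h1, h2⟩
      exact ⟨h1, Or.inl h2⟩

lemma val_F {k j V x} (h : 1 ≤ x (.F k)) : Val k j V x ↔
    One j (fun i => x (.C k i)) ∧ x (.S k) = 0 ∧ x (.F k) = 1 ∧ Low k x ∧
      V = x (.B k j) := by
  cases k with
  | zero => 
    simp only [Val, Low]
    constructor
    · rintro ⟨h1, ⟨h2, h3⟩ | ⟨h2, h3⟩⟩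
      · omega
      · exact ⟨h1, h2, h3.1, trivial, h3.2⟩
    · rintro ⟨h1, h2, h3, -, h4⟩
      exact ⟨h1, Or.inr ⟨h2, h3, h4⟩⟩
  | succ k =>
    rw [Val]
    constructor
    · rintro ⟨h1, h2 | h2 | ⟨h2, h3⟩⟩
      · omega
      · exact ⟨h1, h2⟩
      · omega
    · rintro ⟨h1, h2⟩
      exact ⟨h1, Or.inr (Or.inl h2)⟩

lemma val_R {k j V x} (p : Fin 4) (h : 1 ≤ x (.Q (k+1) p)) : Val (k+1) j V x ↔
    One j (fun i => x (.C (k+1) i)) ∧ x (.S (k+1)) = 0 ∧ x (.F (k+1)) = 0 ∧ 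
      One p (fun i => x (.Q (k+1) i)) ∧ ∃ v, Val k p v x ∧ 
       Ok p (en k) (Function.update (fun i => x (.B k i)) p v) ∧
          V = x (.B (k+1) j) + en k * (Function.update (fun i => x (.B k i)) p v) 0
            + (Function.update (fun i => x (.B k i)) p v) 1 := by
  rw [Val]
  constructor
  · rintro ⟨h1, h2 | h2 | ⟨h2, h3, p', v, hq, h4⟩⟩
    · have := h2.2.2.1.1.2.2.2.2 p
      omega
    · have := h2.2.2.1.1.2.2.2.2 p
      omega
    · obtain rfl := hq.eq h
      exact ⟨h1, h2, h3, hq, v, h4⟩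
  · rintro ⟨h1, h2, h3, hq, v, h4⟩
    exact ⟨h1, Or.inr (Or.inr ⟨h2, h3, p, v, hq, h4⟩)⟩

lemma val_RS {k j V x} (p : Fin 4) (h : 1 ≤ x (.Q (k+1) p)) (hS : 1 ≤ x (.S k)) :
    Val (k+1) j V x ↔
    One j (fun i => x (.C (k+1) i)) ∧ x (.S (k+1)) = 0 ∧ x (.F (k+1)) = 0 ∧ 
      One p (fun i => x (.Q (k+1) i)) ∧ One p (fun i => x (.C k i)) ∧ x (.S k) = 1 ∧
      x (.F k) = 0 ∧ Low k x ∧ 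
       Ok p (en k) (Function.update (fun i => x (.B k i)) p (x (.B k p) + en k)) ∧
          V = x (.B (k+1) j)
            + en k * (Function.update (fun i => x (.B k i)) p (x (.B k p) + en k)) 0
            + (Function.update (fun i => x (.B k i)) p (x (.B k p) + en k)) 1 := by
  rw [val_R p h]
  simp only [val_S hS]
  constructor
  · rintro ⟨h1, h2, h3, h4, v, ⟨h5, h6, h7, h8, rfl⟩, h9⟩
    exact ⟨h1, h2, h3, h4, h5, h6, h7, h8, h9⟩
  · rintro ⟨h1, h2, h3, h4, h5, h6, h7, h8, h9⟩
    exact ⟨h1, h2, h3, h4, _, ⟨h5, h6, h7, h8, rfl⟩, h9⟩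

lemma val_RF {k j V x} (p : Fin 4) (h : 1 ≤ x (.Q (k+1) p)) (hS : 1 ≤ x (.F k)) :
    Val (k+1) j V x ↔
    One j (fun i => x (.C (k+1) i)) ∧ x (.S (k+1)) = 0 ∧ x (.F (k+1)) = 0 ∧ 
      One p (fun i => x (.Q (k+1) i)) ∧ One p (fun i => x (.C k i)) ∧ x (.S k) = 0 ∧
      x (.F k) = 1 ∧ Low k x ∧ 
       Ok p (en k) (fun i => x (.B k i)) ∧
          V = x (.B (k+1) j) + en k * x (.B k 0) + x (.B k 1) := by
  rw [val_R p h]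
  simp only [val_F hS]
  constructor
  · rintro ⟨h1, h2, h3, h4, v, ⟨h5, h6, h7, h8, rfl⟩, h9⟩
    rw [Function.update_eq_self_iff.2 rfl] at h9
    exact ⟨h1, h2, h3, h4, h5, h6, h7, h8, h9⟩
  · rintro ⟨h1, h2, h3, h4, h5, h6, h7, h8, h9⟩
    refine ⟨h1, h2, h3, h4, _, ⟨h5, h6, h7, h8, rfl⟩, ?_⟩
    rw [Function.update_eq_self_iff.2 rfl]
    exact h9

def Good (k : ℕ) (l r : St) : Prop := ∀ w j V, Val k j V (w + l) ↔ Val k j V (w + r)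

structure Rule (m : ℕ) (l r : St) : Prop where
  good : Good m l r
  hS : ∀ k, m < k → l (.S k) = r (.S k)
  hF : ∀ k, m < k → l (.F k) = r (.F k)
  hQ : ∀ k, m < k → ∀ j, l (.Q k j) = r (.Q k j)
  hC : ∀ k, m < k → ∀ j, l (.C k j) = r (.C k j)
  hB : ∀ k, m < k → ∀ j, l (.B k j) = r (.B k j)
  hBm : ∀ i, l (.B m i) = r (.B m i) ∨ (1 ≤ l (.C m i) ∧ 1 ≤ r (.C m i))
  lowl : ∀ w, ¬ Low (m+1) (w + l)
  lowr : ∀ w, ¬ Low (m+1) (w + r)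

lemma Rule.lift_aux {m l r} (h : Rule m l r) {k : ℕ} (hk : m ≤ k)
    (w : St) {p v} (hv : Val k p v (w + l)) :
    Function.update (fun i => (w + l) (.B k i)) p v = 
      Function.update (fun i => (w + r) (.B k i)) p v := by
  funext i
  by_cases hi : i = p
  · subst hi; simp
  · simp only [Function.update_of_ne hi, Pi.add_apply]
    rcases Nat.lt_or_ge m k with h1 | h1
    · rw [h.hB k h1]
    · obtain rfl : k = m := by omega
      rcases h.hBm i with h2 | h2
      · rw [h2]
      · exact absurd (hv.one.eq (p := i) (by simp; omega)).symm hi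

lemma Rule.lift {m l r} (h : Rule m l r) {k : ℕ} (hk : m ≤ k) : Good k l r := by
  induction k, hk using Nat.le_induction with
  | base => exact h.good
  | succ k hk ih =>
    intro w j V
    have hl : ¬ Low (k+1) (w + l) := fun hh => h.lowl w (hh.of_le (by omega))
    have hr : ¬ Low (k+1) (w + r) := fun hh => h.lowr w (hh.of_le (by omega))
    have e1 : (w + l) (.S (k+1)) = (w + r) (.S (k+1)) := by simp [h.hS (k+1) (by omega)]
    have e2 : (w + l) (.F (k+1)) = (w + r) (.F (k+1)) := by simp [h.hF (k+1) (by omega)]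
    have e3 : ∀ i, (w + l) (.Q (k+1) i) = (w + r) (.Q (k+1) i) := by
      simp [h.hQ (k+1) (by omega)]
    have e4 : ∀ i, (w + l) (.C (k+1) i) = (w + r) (.C (k+1) i) := by
      simp [h.hC (k+1) (by omega)]
    have e5 : ∀ i, (w + l) (.B (k+1) i) = (w + r) (.B (k+1) i) := by
      simp [h.hB (k+1) (by omega)]
    simp only [Val, hl, hr, e1, e2, e3, e4, e5, false_and, and_false, false_or]
    constructor
    · rintro ⟨h1, h2, h3, p, v, h4, h5, h6⟩
      rw [h.lift_aux hk w h5] at h6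
      exact ⟨h1, h2, h3, p, v, h4, (ih _ _ _).1 h5, h6⟩
    · rintro ⟨h1, h2, h3, p, v, h4, h5, h6⟩
      rw [← h.lift_aux hk w ((ih _ _ _).2 h5)] at h6
      exact ⟨h1, h2, h3, p, v, h4, (ih _ _ _).2 h5, h6⟩

/-- unit vector -/
abbrev u (x : LV) : St := Pi.single x 1

lemma one_iff (j : Fin 4) (y : Fin 4 → ℕ) : One j y ↔
    y 0 = (if j = 0 then 1 else 0) ∧ y 1 = (if j = 1 then 1 else 0) ∧
    y 2 = (if j = 2 then 1 else 0) ∧ y 3 = (if j = 3 then 1 else 0) := by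
  unfold One
  rw [Fin.forall_fin_succ, Fin.forall_fin_succ, Fin.forall_fin_succ, Fin.forall_fin_succ]
  simp [eq_comm]

lemma en_succ (k : ℕ) : en (k+1) = en k * en k := by
  simp only [en, pow_succ, pow_mul]; ring

end Mach

set_option linter.unusedSimpArgs false

namespace Mach
open LV

lemma low_add {k : ℕ} {l : St} (w : St) (hS : ∀ i < k, l (.S i) = 0)
    (hF : ∀ i < k, l (.F i) = 0) (hC : ∀ i < k, ∀ j, l (.C i j) = 0)
    (hB : ∀ i < k, ∀ j, l (.B i j) = 0)
    (hQ : ∀ i ≤ k, ∀ j, l (.Q i j) = 0) : Low k (w + l) ↔ Low k w := by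
  apply Low.congr
  · intro i hi; simp [hS i hi]
  · intro i hi; simp [hF i hi]
  · intro i hi j; simp [hC i hi j]
  · intro i hi j; simp [hB i hi j]
  · intro i hi j; simp [hQ i hi j]

lemma rule0 (i : Fin 4) : Rule 0 (u (B 0 i) + u (B 0 i) + u (C 0 i) + u (F 0))
    (u (C 0 i) + u (S 0)) := by
  constructor
  · intro w j V
    rw [val_F (by simp [Pi.single_apply]), val_S (by simp [Pi.single_apply])]
    simp only [Low]
    have e0 : en 0 = 2 := by simp [en]
    constructor
    · rintro ⟨h1, h2, h3, -, h5⟩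
      obtain rfl := h1.eq (p := i) (by simp [Pi.single_apply])
      simp [Pi.single_apply] at h1 h2 h3 h5 ⊢
      refine ⟨h1, ?_, ?_, ?_⟩ <;> omega
    · rintro ⟨h1, h2, h3, -, h5⟩
      obtain rfl := h1.eq (p := i) (by simp [Pi.single_apply])
      simp [Pi.single_apply] at h1 h2 h3 h5 ⊢
      refine ⟨h1, ?_, ?_, ?_⟩ <;> omega
  · intro k hk; simp [Pi.single_apply]; omega
  · intro k hk; simp [Pi.single_apply]; omega
  · intro k hk j; simp [Pi.single_apply]
  · intro k hk j; simp [Pi.single_apply]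
  · intro k hk j; simp [Pi.single_apply]; omega
  · intro j; by_cases h : j = i <;> simp [Pi.single_apply, h]
  · intro w h; have := h.1.2.1; simp [Pi.single_apply] at this
  · intro w h; have := h.1.1; simp [Pi.single_apply] at this

lemma rule1 (k : ℕ) : Rule (k+1) (u (Q (k+1) 0) + u (C k 0) + u (S k)) (u (S (k+1))) := by
  constructor
  · intro w j V
    rw [val_RS 0 (by simp [Pi.single_apply]) (by simp [Pi.single_apply]),
      val_S (k := k+1) (by simp [Pi.single_apply])]
    rw [Low, low_add, low_add]
    · simp [one_iff, Ok, Pi.single_apply, Fin.forall_fin_succ, en_succ, Function.update_apply]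
      intros
      constructor
      · intro h
        have h1 : w (B k 0) = 0 := by omega
        have h2 : w (B k 3) = 0 := by omega
        simp_all
      · intro h
        simp_all
    all_goals intros; simp [Pi.single_apply]; try omega
  · intro m hk
    have h1 : m ≠ k := by omega
    have h2 : m ≠ k + 1 := by omega
    simp [Pi.single_apply, h1, h2]
  · intro m hk
    have h1 : m ≠ k := by omega
    have h2 : m ≠ k + 1 := by omega
    simp [Pi.single_apply, h1, h2]
  · intro m hk j
    have h1 : m ≠ k := by omega
    have h2 : m ≠ k + 1 := by omega
    simp [Pi.single_apply, h1, h2]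
  · intro m hk j
    have h1 : m ≠ k := by omega
    have h2 : m ≠ k + 1 := by omega
    simp [Pi.single_apply, h1, h2]
  · intro m hk j
    have h1 : m ≠ k := by omega
    have h2 : m ≠ k + 1 := by omega
    simp [Pi.single_apply, h1, h2]
  · intro j; simp [Pi.single_apply]
  · intro w h; have := h.2.1.1; simp [Pi.single_apply] at this
  · intro w h; have := h.1.1; simp [Pi.single_apply] at this

lemma rule2 (k : ℕ) : Rule (k+1) (u (Q (k+1) 1) + u (C k 1) + u (S k))
    (u (Q (k+1) 0) + u (B k 0) + u (C k 0) + u (F k)) := by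
  constructor
  · intro w j V
    rw [val_RS 1 (by simp [Pi.single_apply]) (by simp [Pi.single_apply]),
      val_RF 0 (by simp [Pi.single_apply]) (by simp [Pi.single_apply])]
    rw [low_add, low_add]
    · simp [one_iff, Ok, Pi.single_apply, Function.update_apply, mul_add]
      intros
      omega
    all_goals intros; simp [Pi.single_apply]; try omega
  · intro m hk
    have h1 : m ≠ k := by omega
    have h2 : m ≠ k + 1 := by omega
    simp [Pi.single_apply, h1, h2]
  · intro m hk
    have h1 : m ≠ k := by omega
    have h2 : m ≠ k + 1 := by omega
    simp [Pi.single_apply, h1, h2]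
  · intro m hk j
    have h1 : m ≠ k := by omega
    have h2 : m ≠ k + 1 := by omega
    simp [Pi.single_apply, h1, h2]
  · intro m hk j
    have h1 : m ≠ k := by omega
    have h2 : m ≠ k + 1 := by omega
    simp [Pi.single_apply, h1, h2]
  · intro m hk j
    have h1 : m ≠ k := by omega
    have h2 : m ≠ k + 1 := by omega
    simp [Pi.single_apply, h1, h2]
  · intro j; simp [Pi.single_apply]
  · intro w h; have := h.2.1.1; simp [Pi.single_apply] at this
  · intro w h; have := h.2.1.2.1; simp [Pi.single_apply] at this

lemma rule3 (k : ℕ) : Rule (k+1) (u (Q (k+1) 2) + u (C k 2) + u (F k))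
    (u (Q (k+1) 1) + u (C k 1) + u (F k)) := by
  constructor
  · intro w j V
    rw [val_RF 2 (by simp [Pi.single_apply]) (by simp [Pi.single_apply]),
      val_RF 1 (by simp [Pi.single_apply]) (by simp [Pi.single_apply])]
    rw [low_add, low_add]
    · simp [one_iff, Ok, Pi.single_apply, Function.update_apply, mul_add]
    all_goals intros; simp [Pi.single_apply]; try omega
  · intro m hk
    have h1 : m ≠ k := by omega
    have h2 : m ≠ k + 1 := by omega
    simp [Pi.single_apply, h1, h2]
  · intro m hk
    have h1 : m ≠ k := by omega
    have h2 : m ≠ k + 1 := by omega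
    simp [Pi.single_apply, h1, h2]
  · intro m hk j
    have h1 : m ≠ k := by omega
    have h2 : m ≠ k + 1 := by omega
    simp [Pi.single_apply, h1, h2]
  · intro m hk j
    have h1 : m ≠ k := by omega
    have h2 : m ≠ k + 1 := by omega
    simp [Pi.single_apply, h1, h2]
  · intro m hk j
    have h1 : m ≠ k := by omega
    have h2 : m ≠ k + 1 := by omega
    simp [Pi.single_apply, h1, h2]
  · intro j; simp [Pi.single_apply]
  · intro w h; have := h.2.1.2.1; simp [Pi.single_apply] at this
  · intro w h; have := h.2.1.2.1; simp [Pi.single_apply] at this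

lemma rule4 (k : ℕ) : Rule (k+1) (u (Q (k+1) 2) + u (B k 0) + u (C k 2) + u (S k))
    (u (Q (k+1) 1) + u (B k 3) + u (C k 1) + u (S k)) := by
  constructor
  · intro w j V
    rw [val_RS 2 (by simp [Pi.single_apply]) (by simp [Pi.single_apply]),
      val_RS 1 (by simp [Pi.single_apply]) (by simp [Pi.single_apply])]
    rw [low_add, low_add]
    · simp [one_iff, Ok, Pi.single_apply, Function.update_apply, mul_add]
      intros
      omega
    all_goals intros; simp [Pi.single_apply]; try omega
  · intro m hk
    have h1 : m ≠ k := by omega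
    have h2 : m ≠ k + 1 := by omega
    simp [Pi.single_apply, h1, h2]
  · intro m hk
    have h1 : m ≠ k := by omega
    have h2 : m ≠ k + 1 := by omega
    simp [Pi.single_apply, h1, h2]
  · intro m hk j
    have h1 : m ≠ k := by omega
    have h2 : m ≠ k + 1 := by omega
    simp [Pi.single_apply, h1, h2]
  · intro m hk j
    have h1 : m ≠ k := by omega
    have h2 : m ≠ k + 1 := by omega
    simp [Pi.single_apply, h1, h2]
  · intro m hk j
    have h1 : m ≠ k := by omega
    have h2 : m ≠ k + 1 := by omega
    simp [Pi.single_apply, h1, h2]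
  · intro j; simp [Pi.single_apply]
  · intro w h; have := h.2.1.1; simp [Pi.single_apply] at this
  · intro w h; have := h.2.1.1; simp [Pi.single_apply] at this

lemma rule5 (k : ℕ) : Rule (k+1) (u (Q (k+1) 3) + u (B k 3) + u (C k 3) + u (F k))
    (u (Q (k+1) 2) + u (C k 2) + u (S k)) := by
  constructor
  · intro w j V
    rw [val_RF 3 (by simp [Pi.single_apply]) (by simp [Pi.single_apply]),
      val_RS 2 (by simp [Pi.single_apply]) (by simp [Pi.single_apply])]
    rw [low_add, low_add]
    · simp [one_iff, Ok, Pi.single_apply, Function.update_apply, mul_add]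
      intros
      omega
    all_goals intros; simp [Pi.single_apply]; try omega
  · intro m hk
    have h1 : m ≠ k := by omega
    have h2 : m ≠ k + 1 := by omega
    simp [Pi.single_apply, h1, h2]
  · intro m hk
    have h1 : m ≠ k := by omega
    have h2 : m ≠ k + 1 := by omega
    simp [Pi.single_apply, h1, h2]
  · intro m hk j
    have h1 : m ≠ k := by omega
    have h2 : m ≠ k + 1 := by omega
    simp [Pi.single_apply, h1, h2]
  · intro m hk j
    have h1 : m ≠ k := by omega
    have h2 : m ≠ k + 1 := by omega
    simp [Pi.single_apply, h1, h2]
  · intro m hk j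
    have h1 : m ≠ k := by omega
    have h2 : m ≠ k + 1 := by omega
    simp [Pi.single_apply, h1, h2]
  · intro j; simp [Pi.single_apply]
  · intro w h; have := h.2.1.2.1; simp [Pi.single_apply] at this
  · intro w h; have := h.2.1.1; simp [Pi.single_apply] at this

lemma rule6 (k : ℕ) : Rule (k+1) (u (Q (k+1) 3) + u (C k 3) + u (S k)) (u (F (k+1))) := by
  constructor
  · intro w j V
    rw [val_RS 3 (by simp [Pi.single_apply]) (by simp [Pi.single_apply]),
      val_F (k := k+1) (by simp [Pi.single_apply])]
    rw [Low, low_add, low_add]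
    · simp [one_iff, Ok, Pi.single_apply, Fin.forall_fin_succ, en_succ, Function.update_apply]
      intros
      constructor
      · intro h
        have h1 : w (B k 0) = 0 := by omega
        have h2 : w (B k 3) = 0 := by omega
        simp_all
      · intro h
        simp_all
    all_goals intros; simp [Pi.single_apply]; try omega
  · intro m hk
    have h1 : m ≠ k := by omega
    have h2 : m ≠ k + 1 := by omega
    simp [Pi.single_apply, h1, h2]
  · intro m hk
    have h1 : m ≠ k := by omega
    have h2 : m ≠ k + 1 := by omega
    simp [Pi.single_apply, h1, h2]
  · intro m hk j
    have h1 : m ≠ k := by omega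
    have h2 : m ≠ k + 1 := by omega
    simp [Pi.single_apply, h1, h2]
  · intro m hk j
    have h1 : m ≠ k := by omega
    have h2 : m ≠ k + 1 := by omega
    simp [Pi.single_apply, h1, h2]
  · intro m hk j
    have h1 : m ≠ k := by omega
    have h2 : m ≠ k + 1 := by omega
    simp [Pi.single_apply, h1, h2]
  · intro j; simp [Pi.single_apply]
  · intro w h; have := h.2.1.1; simp [Pi.single_apply] at this
  · intro w h; have := h.1.2.1; simp [Pi.single_apply] at this

lemma rule7 (k : ℕ) (i : Fin 4) :
    Rule (k+1) (u (Q (k+1) 1) + u (B k 2) + u (B (k+1) i) + u (C (k+1) i) + u (F k))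
    (u (Q (k+1) 1) + u (B k 1) + u (C (k+1) i) + u (F k)) := by
  constructor
  · intro w j V
    rw [val_RF 1 (by simp [Pi.single_apply]) (by simp [Pi.single_apply]),
      val_RF 1 (by simp [Pi.single_apply]) (by simp [Pi.single_apply])]
    rw [low_add, low_add]
    · constructor
      · rintro ⟨h1, h⟩
        obtain rfl := h1.eq (p := i) (by simp [Pi.single_apply])
        refine ⟨by simpa [Pi.single_apply] using h1, ?_⟩
        clear h1
        simp [one_iff, Ok, Pi.single_apply] at h ⊢
        simp_all
        omega
      · rintro ⟨h1, h⟩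
        obtain rfl := h1.eq (p := i) (by simp [Pi.single_apply])
        refine ⟨by simpa [Pi.single_apply] using h1, ?_⟩
        clear h1
        simp [one_iff, Ok, Pi.single_apply] at h ⊢
        simp_all
        omega
    all_goals intros; simp [Pi.single_apply]; try omega
  · intro m hk
    have h1 : m ≠ k := by omega
    have h2 : m ≠ k + 1 := by omega
    simp [Pi.single_apply, h1, h2]
  · intro m hk
    have h1 : m ≠ k := by omega
    have h2 : m ≠ k + 1 := by omega
    simp [Pi.single_apply, h1, h2]
  · intro m hk j
    have h1 : m ≠ k := by omega
    have h2 : m ≠ k + 1 := by omega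
    simp [Pi.single_apply, h1, h2]
  · intro m hk j
    have h1 : m ≠ k := by omega
    have h2 : m ≠ k + 1 := by omega
    simp [Pi.single_apply, h1, h2]
  · intro m hk j
    have h1 : m ≠ k := by omega
    have h2 : m ≠ k + 1 := by omega
    simp [Pi.single_apply, h1, h2]
  · intro j; by_cases h : j = i <;> simp [Pi.single_apply, h]
  · intro w h; have := h.2.1.2.1; simp [Pi.single_apply] at this
  · intro w h; have := h.2.1.2.1; simp [Pi.single_apply] at this

end Mach

namespace Mach

def emb (n : ℕ) : LV → Option (MVar n)
  | .S k => if h : k < n + 1 then some (vS false ⟨k, h⟩) else none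
  | .F k => if h : k < n + 1 then some (vF false ⟨k, h⟩) else none
  | .Q k j => if h : k < n + 1 then some (vQ false j ⟨k, h⟩) else none
  | .C k j => if h : k < n + 1 then some (vC false j ⟨k, h⟩) else none
  | .B k j => if h : k < n + 1 then some (vB false j ⟨k, h⟩) else none

def view {n : ℕ} (t : Mon (MVar n)) : St := fun x => (emb n x).elim 0 t

lemma view_add {n : ℕ} (t t' : Mon (MVar n)) : view (t + t') = view t + view t' := by
  funext x
  simp only [view, Pi.add_apply]
  cases emb n x <;> simp

lemma view_single_of {n : ℕ} (y : MVar n) (z : LV) (h : ∀ x, emb n x = some y ↔ x = z) :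
    view (Finsupp.single y 1) = u z := by
  funext x
  simp only [view, Pi.single_apply, ← h]
  cases hx : emb n x with
  | none => simp
  | some v => simp [Finsupp.single_apply, eq_comm]

lemma view_single_none {n : ℕ} (y : MVar n) (h : ∀ x, emb n x ≠ some y) (c : ℕ) :
    view (Finsupp.single y c) = 0 := by
  funext x
  simp only [view]
  have := h x
  cases hx : emb n x with
  | none => simp
  | some v => simp [Finsupp.single_apply]; rintro rfl; exact absurd hx this

lemma view_S {n : ℕ} (i : Fin (n+1)) : view (Finsupp.single (vS false i) 1) = u (.S i) := by
  apply view_single_of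
  intro x; cases x <;> simp [emb, Fin.ext_iff]; omega
lemma view_F {n : ℕ} (i : Fin (n+1)) : view (Finsupp.single (vF false i) 1) = u (.F i) := by
  apply view_single_of
  intro x; cases x <;> simp [emb, Fin.ext_iff]; omega
lemma view_Q {n : ℕ} (i : Fin (n+1)) (j) :
    view (Finsupp.single (vQ false j i) 1) = u (.Q i j) := by
  apply view_single_of
  intro x; cases x <;> simp [emb, Fin.ext_iff]; omega
lemma view_C {n : ℕ} (i : Fin (n+1)) (j) :
    view (Finsupp.single (vC false j i) 1) = u (.C i j) := by
  apply view_single_of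
  intro x; cases x <;> simp [emb, Fin.ext_iff]; omega
lemma view_B {n : ℕ} (i : Fin (n+1)) (j) :
    view (Finsupp.single (vB false j i) 1) = u (.B i j) := by
  apply view_single_of
  intro x; cases x <;> simp [emb, Fin.ext_iff]; omega

def isLev {n : ℕ} : MVar n → Prop
  | .vS b _ => b = false
  | .vF b _ => b = false
  | .vQ b _ _ => b = false
  | .vC b _ _ => b = false
  | .vB b _ _ => b = false
  | _ => False

def isBar {n : ℕ} : MVar n → Prop
  | .vS b _ => b = true
  | .vF b _ => b = true
  | .vQ b _ _ => b = true
  | .vC b _ _ => b = true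
  | .vB b _ _ => b = true
  | _ => False

lemma view_nl {n : ℕ} (y : MVar n) (h : ¬ isLev y) (c : ℕ) : view (Finsupp.single y c) = 0 := by
  apply view_single_none
  rintro x hx
  apply h
  cases x <;> simp [emb] at hx <;> obtain ⟨_, rfl⟩ := hx <;> simp [isLev]

def Idle (n : ℕ) (x : St) : Prop :=
  x (.S n) = 0 ∧ x (.F n) = 0 ∧ (∀ j, x (.C n j) = 0) ∧ Low n x

def Inv {n : ℕ} (m1 m2 : ℕ) (t : Mon (MVar n)) : Prop :=
  t vs = 0 ∧ (∀ y, isBar y → t y = 0) ∧ t vc + t vb = m2 ∧ t vcb + t vbb = m1 ∧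
    ((t vl = 1 ∧ Idle n (view t) ∧ view t (.B n 3) = t vb + t vbb) ∨
     (t vl = 0 ∧ Val n 3 (t vb + t vbb) (view t)))

/-- equivalence of two monomials with respect to the invariant -/
def Pres {n : ℕ} (l r : Mon (MVar n)) : Prop :=
  (∃ y, y ≠ vc ∧ y ≠ vcb ∧ l y ≠ 0) ∧ (∃ y, y ≠ vc ∧ y ≠ vcb ∧ r y ≠ 0) ∧
  ∀ m1 m2, m1 + m2 < en n → ∀ w, Inv m1 m2 (w + l) ↔ Inv m1 m2 (w + r)

lemma not_inv_bar {n : ℕ} {m1 m2 : ℕ} {t : Mon (MVar n)} (y) (hy : isBar y) (h : t y ≠ 0) :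
    ¬ Inv m1 m2 t := fun hh => h (hh.2.1 y hy)

lemma pres_bar {n : ℕ} {l r : Mon (MVar n)} (y y') (hy : isBar y) (h : l y ≠ 0)
    (hy' : isBar y') (h' : r y' ≠ 0) : Pres l r := by
  refine ⟨⟨y, ?_, ?_, h⟩, ⟨y', ?_, ?_, h'⟩, ?_⟩
  · rintro rfl; exact hy
  · rintro rfl; exact hy
  · rintro rfl; exact hy'
  · rintro rfl; exact hy'
  · intro m1 m2 _ w
    have h1 : ¬ Inv m1 m2 (w + l) := not_inv_bar y hy (by simp; omega)
    have h2 : ¬ Inv m1 m2 (w + r) := not_inv_bar y' hy' (by simp; omega)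
    simp [h1, h2]

/-- a control variable `s_i`, `f_i` of level at most `n` -/
lemma not_idle_of {n : ℕ} {w l : St} (k : ℕ) (hk : k ≤ n) (h : 1 ≤ l (.S k) ∨ 1 ≤ l (.F k)) :
    ¬ Idle n (w + l) := by
  rintro ⟨h1, h2, h3, h4⟩
  rcases Nat.lt_or_ge k n with h5 | h5
  · have := Low.of_le (m := k+1) (by omega) h4
    have h6 := this.1.1
    have h7 := this.1.2.1
    simp at h6 h7
    omega
  · obtain rfl : k = n := by omega
    simp at h1 h2
    omega

lemma pres_rule {n : ℕ} {l r : Mon (MVar n)} (m : ℕ) (hm : m ≤ n) (h : Rule m (view l) (view r))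
    (hl : ∀ y, ¬ isLev y → l y = 0) (hr : ∀ y, ¬ isLev y → r y = 0)
    (kl kr : ℕ) (hkl : kl ≤ n) (hkr : kr ≤ n)
    (hl' : 1 ≤ view l (.S kl) ∨ 1 ≤ view l (.F kl))
    (hr' : 1 ≤ view r (.S kr) ∨ 1 ≤ view r (.F kr)) : Pres l r := by
  have key : ∀ (l : Mon (MVar n)) (k : ℕ) , k ≤ n → (∀ y, ¬ isLev y → l y = 0) →
     1 ≤ view l (.S k) ∨ 1 ≤ view l (.F k) → ∃ y, y ≠ vc ∧ y ≠ vcb ∧ l y ≠ 0 := by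
    intro l k hk hl h
    have : l ≠ 0 := by
      rintro rfl
      simp [view, emb] at h
      split at h <;> simp at h
    obtain ⟨y, hy⟩ := Finsupp.ne_iff.1 this
    refine ⟨y, ?_, ?_, hy⟩
    · rintro rfl; exact hy (hl _ (by simp [isLev]))
    · rintro rfl; exact hy (hl _ (by simp [isLev]))
  refine ⟨key l kl hkl hl hl', key r kr hkr hr hr', ?_⟩
  intro m1 m2 _ w
  have e : ∀ y, ¬ isLev y → (w + l) y = (w + r) y := by
    intro y hy; simp [hl y hy, hr y hy]
  have eb : (∀ y, isBar y → (w + l) y = 0) ↔ (∀ y, isBar y → (w + r) y = 0) := by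
    refine forall_congr' fun y => ?_
    refine imp_congr_right fun hy => ?_
    rw [e]
    cases y <;> simp_all [isBar, isLev]
  simp only [Inv]
  rw [eb, e vs (by simp [isLev]), e vl (by simp [isLev]), e vc (by simp [isLev]),
    e vcb (by simp [isLev]), e vb (by simp [isLev]), e vbb (by simp [isLev]), view_add, view_add,
    h.lift hm]
  simp [not_idle_of kl hkl hl', not_idle_of kr hkr hr']

/-- monomial `w l` is never invariant if `s_n` divides `l`. -/
lemma not_inv_S {n : ℕ} {m1 m2 : ℕ} (hm : m1 + m2 < en n) {t : Mon (MVar n)}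
    (h : 1 ≤ view t (.S n)) : ¬ Inv m1 m2 t := by
  rintro ⟨-, -, h1, h2, ⟨-, h3, -⟩ | ⟨-, h3⟩⟩
  · have := h3.1
    omega
  · rw [val_S h] at h3
    omega

end Mach

namespace Mach

noncomputable abbrev sg {n : ℕ} (y : MVar n) : Mon (MVar n) := Finsupp.single y 1

def GenOK {n : ℕ} (f : MPoly n) : Prop :=
  ∃ l r, f = monomial l 1 + monomial r 1 ∧ Pres l r

lemma X_eq {n : ℕ} (y : MVar n) : (X y : MPoly n) = monomial (sg y) 1 := rfl

lemma gen_P0 (n : ℕ) (bar : Bool) (f : MPoly n) (hf : f ∈ P0 n bar) : GenOK f := by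
  obtain ⟨j, rfl⟩ := hf
  refine ⟨sg (vB bar j 0) + sg (vB bar j 0) + sg (vC bar j 0) + sg (vF bar 0),
    sg (vC bar j 0) + sg (vS bar 0), ?_, ?_⟩
  · simp only [X_eq, sq, monomial_mul, mul_one]
  cases bar with
  | true => exact pres_bar (vF true 0) (vS true 0) rfl (by simp) rfl (by simp)
  | false =>
    refine pres_rule 0 (by omega) ?_ ?_ ?_ 0 0 (by omega) (by omega) ?_ ?_
    · simp only [view_add, view_B, view_C, view_S, view_F]
      exact rule0 j
    · intro y hy; cases y <;> simp_all [isLev]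
    · intro y hy; cases y <;> simp_all [isLev]
    · right; simp [view_add, view_B, view_C, view_S, view_F]
    · left; simp [view_add, view_B, view_C, view_S, view_F]

lemma gen_Pm (n : ℕ) (bar : Bool) (i : Fin n) (f : MPoly n) (hf : f ∈ Pm n bar i) :
    GenOK f := by
  have hi := i.2
  rcases hf with (rfl | rfl | rfl | rfl | rfl | rfl) | ⟨j, rfl⟩
  · refine ⟨sg (vQ bar 0 i.succ) + sg (vC bar 0 i.castSucc) + sg (vS bar i.castSucc),
      sg (vS bar i.succ), by simp only [X_eq, monomial_mul, mul_one], ?_⟩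
    cases bar with
    | true => exact pres_bar (vS true i.castSucc) (vS true i.succ) rfl (by simp) rfl (by simp)
    | false =>
      refine pres_rule (i+1) (by omega) ?_ ?_ ?_ i (i+1) (by omega) (by omega) ?_ ?_
      · simp only [view_add, view_B, view_C, view_S, view_F, view_Q]
        exact rule1 i
      · intro y hy; cases y <;> simp_all [isLev]
      · intro y hy; cases y <;> simp_all [isLev]
      · left; simp [view_add, view_B, view_C, view_S, view_F, view_Q]
      · left; simp [view_add, view_B, view_C, view_S, view_F, view_Q]
  · refine ⟨sg (vQ bar 1 i.succ) + sg (vC bar 1 i.castSucc) + sg (vS bar i.castSucc),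
      sg (vQ bar 0 i.succ) + sg (vB bar 0 i.castSucc) + sg (vC bar 0 i.castSucc)
        + sg (vF bar i.castSucc), by simp only [X_eq, monomial_mul, mul_one], ?_⟩
    cases bar with
    | true => exact pres_bar (vS true i.castSucc) (vF true i.castSucc) rfl (by simp) rfl (by simp)
    | false =>
      refine pres_rule (i+1) (by omega) ?_ ?_ ?_ i i (by omega) (by omega) ?_ ?_
      · simp only [view_add, view_B, view_C, view_S, view_F, view_Q]
        exact rule2 i
      · intro y hy; cases y <;> simp_all [isLev]
      · intro y hy; cases y <;> simp_all [isLev]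
      · left; simp [view_add, view_B, view_C, view_S, view_F, view_Q]
      · right; simp [view_add, view_B, view_C, view_S, view_F, view_Q]
  · refine ⟨sg (vQ bar 2 i.succ) + sg (vC bar 2 i.castSucc) + sg (vF bar i.castSucc),
      sg (vQ bar 1 i.succ) + sg (vC bar 1 i.castSucc) + sg (vF bar i.castSucc),
      by simp only [X_eq, monomial_mul, mul_one], ?_⟩
    cases bar with
    | true => exact pres_bar (vF true i.castSucc) (vF true i.castSucc) rfl (by simp) rfl (by simp)
    | false =>
      refine pres_rule (i+1) (by omega) ?_ ?_ ?_ i i (by omega) (by omega) ?_ ?_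
      · simp only [view_add, view_B, view_C, view_S, view_F, view_Q]
        exact rule3 i
      · intro y hy; cases y <;> simp_all [isLev]
      · intro y hy; cases y <;> simp_all [isLev]
      · right; simp [view_add, view_B, view_C, view_S, view_F, view_Q]
      · right; simp [view_add, view_B, view_C, view_S, view_F, view_Q]
  · refine ⟨sg (vQ bar 2 i.succ) + sg (vB bar 0 i.castSucc) + sg (vC bar 2 i.castSucc)
        + sg (vS bar i.castSucc),
      sg (vQ bar 1 i.succ) + sg (vB bar 3 i.castSucc) + sg (vC bar 1 i.castSucc)
        + sg (vS bar i.castSucc),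
      by simp only [X_eq, monomial_mul, mul_one], ?_⟩
    cases bar with
    | true => exact pres_bar (vS true i.castSucc) (vS true i.castSucc) rfl (by simp) rfl (by simp)
    | false =>
      refine pres_rule (i+1) (by omega) ?_ ?_ ?_ i i (by omega) (by omega) ?_ ?_
      · simp only [view_add, view_B, view_C, view_S, view_F, view_Q]
        exact rule4 i
      · intro y hy; cases y <;> simp_all [isLev]
      · intro y hy; cases y <;> simp_all [isLev]
      · left; simp [view_add, view_B, view_C, view_S, view_F, view_Q]
      · left; simp [view_add, view_B, view_C, view_S, view_F, view_Q]
  · refine ⟨sg (vQ bar 3 i.succ) + sg (vB bar 3 i.castSucc) + sg (vC bar 3 i.castSucc)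
        + sg (vF bar i.castSucc),
      sg (vQ bar 2 i.succ) + sg (vC bar 2 i.castSucc) + sg (vS bar i.castSucc),
      by simp only [X_eq, monomial_mul, mul_one], ?_⟩
    cases bar with
    | true => exact pres_bar (vF true i.castSucc) (vS true i.castSucc) rfl (by simp) rfl (by simp)
    | false =>
      refine pres_rule (i+1) (by omega) ?_ ?_ ?_ i i (by omega) (by omega) ?_ ?_
      · simp only [view_add, view_B, view_C, view_S, view_F, view_Q]
        exact rule5 i
      · intro y hy; cases y <;> simp_all [isLev]
      · intro y hy; cases y <;> simp_all [isLev]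
      · right; simp [view_add, view_B, view_C, view_S, view_F, view_Q]
      · left; simp [view_add, view_B, view_C, view_S, view_F, view_Q]
  · refine ⟨sg (vQ bar 3 i.succ) + sg (vC bar 3 i.castSucc) + sg (vS bar i.castSucc),
      sg (vF bar i.succ), by simp only [X_eq, monomial_mul, mul_one], ?_⟩
    cases bar with
    | true => exact pres_bar (vS true i.castSucc) (vF true i.succ) rfl (by simp) rfl (by simp)
    | false =>
      refine pres_rule (i+1) (by omega) ?_ ?_ ?_ i (i+1) (by omega) (by omega) ?_ ?_
      · simp only [view_add, view_B, view_C, view_S, view_F, view_Q]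
        exact rule6 i
      · intro y hy; cases y <;> simp_all [isLev]
      · intro y hy; cases y <;> simp_all [isLev]
      · left; simp [view_add, view_B, view_C, view_S, view_F, view_Q]
      · right; simp [view_add, view_B, view_C, view_S, view_F, view_Q]
  · refine ⟨sg (vQ bar 1 i.succ) + sg (vB bar 2 i.castSucc) + sg (vB bar j i.succ)
        + sg (vC bar j i.succ) + sg (vF bar i.castSucc),
      sg (vQ bar 1 i.succ) + sg (vB bar 1 i.castSucc) + sg (vC bar j i.succ)
        + sg (vF bar i.castSucc), by simp only [X_eq, monomial_mul, mul_one], ?_⟩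
    cases bar with
    | true => exact pres_bar (vF true i.castSucc) (vF true i.castSucc) rfl (by simp) rfl (by simp)
    | false =>
      refine pres_rule (i+1) (by omega) ?_ ?_ ?_ i i (by omega) (by omega) ?_ ?_
      · simp only [view_add, view_B, view_C, view_S, view_F, view_Q]
        exact rule7 i j
      · intro y hy; cases y <;> simp_all [isLev]
      · intro y hy; cases y <;> simp_all [isLev]
      · right; simp [view_add, view_B, view_C, view_S, view_F, view_Q]
      · right; simp [view_add, view_B, view_C, view_S, view_F, view_Q]

lemma bar_congr {n : ℕ} {a b : Mon (MVar n)} (h : ∀ y, isBar y → a y = b y) (w : Mon (MVar n)) :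
    (∀ y, isBar y → (w + a) y = 0) ↔ (∀ y, isBar y → (w + b) y = 0) := by
  refine forall_congr' fun y => imp_congr_right fun hy => ?_
  simp [h y hy]

lemma val_l {n : ℕ} {V : ℕ} {x : St} (h : Val n 3 V x) : x (.C n 3) = 1 := by
  simpa using h.one 3

lemma gen_G (n : ℕ) (f : MPoly n) (hf : f ∈ GG n) : GenOK f := by
  have nv : ∀ y : MVar n, ¬ isLev y → view (sg y) = 0 := fun y hy => view_nl y hy 1
  have nvl := nv vl (by simp [isLev])
  have nvb := nv vb (by simp [isLev])
  have nvbb := nv vbb (by simp [isLev])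
  have nvc := nv vc (by simp [isLev])
  have nvcb := nv vcb (by simp [isLev])
  rcases hf with rfl | rfl | rfl | rfl | rfl | rfl | rfl
  · refine ⟨sg (vB false 3 (Fin.last n)) + sg vl + sg vb, sg vl + sg vc,
      by simp only [X_eq, monomial_mul, mul_one], ⟨vl, by simp, by simp, by simp⟩,
      ⟨vl, by simp, by simp, by simp⟩, ?_⟩
    intro m1 m2 hm w
    have hL : Idle n (view w + u (.B n 3)) ↔ Idle n (view w) := by
      simp only [Idle]
      rw [low_add]
      · simp
      all_goals intros; simp [Pi.single_apply]; try omega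
    rw [Inv, Inv, bar_congr (b := sg vl + sg vc)]
    · simp [view_add, view_B, nvl, nvb, nvbb, nvc, nvcb, hL, -implies_true]
      intros
      constructor
      · rintro ⟨h1, h2, h3, h4, h5⟩
        refine ⟨?_, h2, h3, h4, ?_⟩ <;> omega
      · rintro ⟨h1, h2, h3, h4, h5⟩
        refine ⟨?_, h2, h3, h4, ?_⟩ <;> omega
    · intro y hy; cases y <;> simp_all [isBar]
  · refine ⟨sg (vB false 3 (Fin.last n)) + sg vl + sg vbb, sg vl + sg vcb,
      by simp only [X_eq, monomial_mul, mul_one], ⟨vl, by simp, by simp, by simp⟩,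
      ⟨vl, by simp, by simp, by simp⟩, ?_⟩
    intro m1 m2 hm w
    have hL : Idle n (view w + u (.B n 3)) ↔ Idle n (view w) := by
      simp only [Idle]
      rw [low_add]
      · simp
      all_goals intros; simp [Pi.single_apply]; try omega
    rw [Inv, Inv, bar_congr (b := sg vl + sg vcb)]
    · simp [view_add, view_B, nvl, nvb, nvbb, nvc, nvcb, hL, -implies_true]
      intros
      constructor
      · rintro ⟨h1, h2, h3, h4⟩
        refine ⟨?_, h2, h3, ?_⟩ <;> omega
      · rintro ⟨h1, h2, h3, h4⟩
        refine ⟨?_, h2, h3, ?_⟩ <;> omega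
    · intro y hy; cases y <;> simp_all [isBar]
  · refine ⟨sg (vC false 3 (Fin.last n)) + sg (vF false (Fin.last n)), sg vl,
      by simp only [X_eq, monomial_mul, mul_one],
      ⟨vF false (Fin.last n), by simp, by simp, by simp⟩,
      ⟨vl, by simp, by simp, by simp⟩, ?_⟩
    intro m1 m2 hm w
    have hv : 1 ≤ (view w + (u (.C n 3) + u (.F n))) (.F n) := by simp
    have hL : Low n (view w + (u (.C n 3) + u (.F n))) ↔ Low n (view w) := by
      rw [low_add]
      all_goals intros; simp [Pi.single_apply]; try omega
    rw [Inv, Inv, bar_congr (b := sg vl)]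
    · simp only [view_add, view_C, view_F, nvl, Fin.val_last, val_F hv, hL]
      simp [Idle, one_iff, Pi.single_apply, -implies_true, Fin.forall_fin_succ, and_assoc]
      intros
      constructor
      · intro h; simp_all
      · intro h; simp_all
    · intro y hy; cases y <;> simp_all [isBar]
  · refine ⟨sg (vC true 3 (Fin.last n)) + sg (vF true (Fin.last n)),
      sg (vC false 3 (Fin.last n)) + sg (vS false (Fin.last n)),
      by simp only [X_eq, monomial_mul, mul_one],
      ⟨vF true (Fin.last n), by simp, by simp, by simp⟩,
      ⟨vS false (Fin.last n), by simp, by simp, by simp⟩, ?_⟩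
    intro m1 m2 hm w
    refine iff_of_false (not_inv_bar (vF true (Fin.last n)) rfl (by simp)) (not_inv_S hm ?_)
    simp [view_add, view_C, view_S]
  · refine ⟨sg (vB true 3 (Fin.last n)) + sg (vC false 3 (Fin.last n))
        + sg (vS false (Fin.last n)),
      sg (vC false 3 (Fin.last n)) + sg (vS false (Fin.last n)) + sg vb,
      by simp only [X_eq, monomial_mul, mul_one],
      ⟨vS false (Fin.last n), by simp, by simp, by simp⟩,
      ⟨vS false (Fin.last n), by simp, by simp, by simp⟩, ?_⟩
    intro m1 m2 hm w
    refine iff_of_false (not_inv_bar (vB true 3 (Fin.last n)) rfl (by simp)) (not_inv_S hm ?_)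
    simp [view_add, view_C, view_S, nvb, nvbb]
  · refine ⟨sg (vB true 3 (Fin.last n)) + sg (vC false 3 (Fin.last n))
        + sg (vS false (Fin.last n)),
      sg (vC false 3 (Fin.last n)) + sg (vS false (Fin.last n)) + sg vbb,
      by simp only [X_eq, monomial_mul, mul_one],
      ⟨vS false (Fin.last n), by simp, by simp, by simp⟩,
      ⟨vS false (Fin.last n), by simp, by simp, by simp⟩, ?_⟩
    intro m1 m2 hm w
    refine iff_of_false (not_inv_bar (vB true 3 (Fin.last n)) rfl (by simp)) (not_inv_S hm ?_)
    simp [view_add, view_C, view_S, nvb, nvbb]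
  · refine ⟨sg (vC true 3 (Fin.last n)) + sg (vS true (Fin.last n)), sg vs,
      by simp only [X_eq, monomial_mul, mul_one],
      ⟨vS true (Fin.last n), by simp, by simp, by simp⟩,
      ⟨vs, by simp, by simp, by simp⟩, ?_⟩
    intro m1 m2 hm w
    refine iff_of_false (not_inv_bar (vS true (Fin.last n)) rfl (by simp)) ?_
    rintro ⟨h, -⟩
    simp at h

lemma gen_F (n : ℕ) (f : MPoly n) (hf : f ∈ FF n) : GenOK f := by
  rcases hf with ((h | h) | (h | h)) | h
  · exact gen_P0 _ _ _ h
  · obtain ⟨i, hi⟩ := Set.mem_iUnion.1 h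
    exact gen_Pm _ _ _ _ hi
  · exact gen_P0 _ _ _ h
  · obtain ⟨i, hi⟩ := Set.mem_iUnion.1 h
    exact gen_Pm _ _ _ _ hi
  · exact gen_G _ _ h

end Mach

namespace Mach

section functional

open Classical in
/-- the linear functional counting (mod 2) the monomials in `A` -/
noncomputable def fn {n : ℕ} (A : Mon (MVar n) → Prop) : MPoly n →ₗ[ZMod 2] ZMod 2 :=
  (basisMonomials (MVar n) (ZMod 2)).constr (ZMod 2) (fun t => if A t then 1 else 0)

open Classical in
lemma fn_monomial {n : ℕ} (A : Mon (MVar n) → Prop) (t : Mon (MVar n)) :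
    fn A (monomial t 1) = if A t then 1 else 0 := by
  have := (basisMonomials (MVar n) (ZMod 2)).constr_basis (ZMod 2)
    (fun t => if A t then (1 : ZMod 2) else 0) t
  rwa [coe_basisMonomials] at this

lemma fn_ideal {n : ℕ} (A : Mon (MVar n) → Prop)
    (hA : ∀ f ∈ FF n, ∃ l r, f = monomial l 1 + monomial r 1 ∧ ∀ w, A (w + l) ↔ A (w + r))
    (p : MPoly n) (hp : p ∈ Ideal.span (FF n)) : fn A p = 0 := by
  have key : ∀ q : MPoly n, fn A (q * p) = 0 := by
    induction hp using Submodule.span_induction with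
    | mem f hf =>
      intro q
      obtain ⟨l, r, rfl, h⟩ := hA f hf
      induction q using MvPolynomial.induction_on' with
      | monomial w a =>
        have : (monomial w a : MPoly n) = a • monomial w 1 := by
          rw [smul_monomial]; simp
        rw [this, smul_mul_assoc, map_smul, mul_add, monomial_mul, monomial_mul, map_add, one_mul,
          fn_monomial, fn_monomial]
        by_cases hw : A (w + l)
        · rw [if_pos hw, if_pos ((h w).1 hw), CharTwo.add_self_eq_zero, smul_zero]
        · rw [if_neg hw, if_neg (fun h' => hw ((h w).2 h')), add_zero, smul_zero]
      | add p q hp hq => rw [add_mul, map_add, hp, hq, add_zero]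
    | zero => simp
    | add x y _ _ hx hy => intro q; rw [mul_add, map_add, hx, hy, add_zero]
    | smul a x _ hx => intro q; rw [smul_eq_mul, ← mul_assoc]; exact hx _
  simpa using key 1

lemma fn_head {n : ℕ} (A : Mon (MVar n) → Prop) (p : MPoly n) (t : Mon (MVar n))
    (ht : t ∈ p.support) (hAt : A t) (hu : ∀ s ∈ p.support, A s → s = t) : fn A p ≠ 0 := by
  classical
  have e : ∀ s ∈ p.support, (monomial s (coeff s p) : MPoly n) = monomial s 1 := by
    intro s hs
    have h1 : coeff s p ≠ 0 := by simpa using hs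
    have : coeff s p = 1 := by
      generalize coeff s p = c at h1
      revert h1; revert c; decide
    rw [this]
  rw [p.as_sum, map_sum, Finset.sum_congr rfl (fun s hs => by rw [e s hs, fn_monomial]),
    Finset.sum_eq_single_of_mem t ht]
  · simp [hAt]
  · intro s hs hne
    rw [if_neg]
    intro h
    exact hne (hu s hs h)

end functional

noncomputable abbrev mon3 (n : ℕ) (j a b : ℕ) : Mon (MVar n) :=
  Finsupp.single vl j + Finsupp.single vcb a + Finsupp.single vc b

lemma mdeg_add {n : ℕ} (s t : Mon (MVar n)) : mdeg (s + t) = mdeg s + mdeg t := by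
  unfold mdeg
  exact Finsupp.sum_add_index' (fun _ => rfl) (fun _ _ _ => rfl)

lemma mdeg_single {n : ℕ} (y : MVar n) (k : ℕ) : mdeg (Finsupp.single y k) = k := by
  simp [mdeg]

lemma mdeg_le {n : ℕ} {s t : Mon (MVar n)} (h : s ≤ t) : mdeg s ≤ mdeg t := by
  obtain ⟨r, rfl⟩ := exists_add_of_le h
  rw [mdeg_add]; omega

lemma eq_of_mdeg {n : ℕ} {s t : Mon (MVar n)} (h : s ≤ t) (hd : mdeg t ≤ mdeg s) : s = t := by
  obtain ⟨r, rfl⟩ := exists_add_of_le h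
  rw [mdeg_add] at hd
  have : mdeg r = 0 := by omega
  have hr : r = 0 := by
    ext y
    have h1 : Finsupp.single y (r y) ≤ r := by simp
    have := mdeg_le h1
    rw [mdeg_single] at this
    simp; omega
  simp [hr]

lemma view_mon3 (n j a b : ℕ) : view (mon3 n j a b) = 0 := by
  simp only [view_add]
  rw [view_nl _ (by simp [isLev]), view_nl _ (by simp [isLev]), view_nl _ (by simp [isLev])]
  simp

lemma low_zero (n : ℕ) : Low n 0 := by
  induction n with
  | zero => trivial
  | succ k ih => exact ⟨by simp, ih⟩

lemma inv_start (n a b : ℕ) : Inv a b (mon3 n 1 a b) := by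
  refine ⟨by simp, ?_, by simp, by simp, Or.inl ⟨by simp, ?_, ?_⟩⟩
  · intro y hy; cases y <;> simp_all [isBar]
  · rw [view_mon3]; exact ⟨rfl, rfl, fun _ => rfl, low_zero n⟩
  · rw [view_mon3]; simp

/-- another variable than `c_{4n}` divides a valid monomial -/
lemma val_extra {n V : ℕ} {x : St} (h : Val n 3 V x) :
    1 ≤ x (.S n) ∨ 1 ≤ x (.F n) ∨ ∃ p, 1 ≤ x (.Q n p) := by
  cases n with
  | zero =>
    rcases h.2 with h | h
    · left; omega
    · right; left; omega
  | succ k =>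
    rcases h.2 with h | h | ⟨_, _, p, v, h, _⟩
    · left; omega
    · right; left; omega
    · right; right; exact ⟨p, by have := h p; simp at this; omega⟩

lemma inv_min (n a b : ℕ) (s : Mon (MVar n)) (hs : Inv a b s)
    (hle : degLexLe n s (mon3 n 1 a b)) : s = mon3 n 1 a b := by
  obtain ⟨h1, h2, h3, h4, h5⟩ := hs
  have hd : mdeg (mon3 n 1 a b) = 1 + a + b := by simp [mdeg_add, mdeg_single]
  have hdle : mdeg s ≤ 1 + a + b := by
    rcases hle with h | h <;> omega
  rcases h5 with ⟨h5, -⟩ | ⟨h5, h6⟩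
  · let v : Mon (MVar n) := Finsupp.single vl 1 + Finsupp.single vcb (s vcb)
      + Finsupp.single vbb (s vbb) + Finsupp.single vc (s vc) + Finsupp.single vb (s vb)
    have hv : v ≤ s := by
      intro y
      cases y <;> simp [v, h5]
    have hvs : v = s := by
      apply eq_of_mdeg hv
      simp only [v, mdeg_add, mdeg_single]
      omega
    have hb : s vb = 0 ∧ s vbb = 0 := by
      rcases hle with h | ⟨-, h | ⟨x, hx, hy⟩⟩
      · have := mdeg_le hv
        simp only [v, mdeg_add, mdeg_single] at this
        omega
      · rw [h]; simp
      · have hr : vrank n x < 4 := by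
          cases x <;> simp_all [vrank]
        have e1 := hy vb hr
        have e2 := hy vbb (hr.trans (Nat.lt_succ_self 4))
        simp at e1 e2
        exact ⟨e1, e2⟩
    rw [← hvs]
    simp only [v, hb.1, hb.2] at h3 h4 ⊢
    simp at h3 h4
    simp [h3, h4]
  · exfalso
    have hc := val_l h6
    have he : ∃ y : MVar n, y ≠ vC false 3 (Fin.last n) ∧ isLev y ∧ 1 ≤ s y := by
      rcases val_extra h6 with h | h | ⟨p, h⟩
      · exact ⟨vS false (Fin.last n), by simp, rfl, by simp [view, emb] at h; exact h⟩
      · exact ⟨vF false (Fin.last n), by simp, rfl, by simp [view, emb] at h; exact h⟩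
      · exact ⟨vQ false p (Fin.last n), by simp, rfl, by simp [view, emb] at h; exact h⟩
    have hc' : s (vC false 3 (Fin.last n)) = 1 := by simp [view, emb] at hc; exact hc
    obtain ⟨y, hy1, hy2, hy3⟩ := he
    let v : Mon (MVar n) := Finsupp.single y 1 + Finsupp.single vcb (s vcb)
      + Finsupp.single vbb (s vbb) + Finsupp.single vc (s vc) + Finsupp.single vb (s vb)
      + Finsupp.single (vC false 3 (Fin.last n)) 1
    have hv : v ≤ s := by
      intro z
      by_cases hz : y = z
      · subst hz
        have : ∀ q : MVar n, ¬ isLev q → q ≠ y := by rintro q hq rfl; exact hq hy2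
        have g1 := this vcb (by simp [isLev])
        have g2 := this vbb (by simp [isLev])
        have g3 := this vc (by simp [isLev])
        have g4 := this vb (by simp [isLev])
        simp [v, Finsupp.single_apply, g1, g2, g3, g4, hy1.symm, hy3]
      · by_cases hz2 : vC false 3 (Fin.last n) = z
        · subst hz2
          simp [v, Finsupp.single_apply, hz, hc']
        · cases z <;> simp [v, hz, hz2, Finsupp.single_apply]
    have := mdeg_le hv
    simp only [v, mdeg_add, mdeg_single] at this
    omega

lemma not_head (n : ℕ) (j a b : ℕ) (hj : j = 0 ∨ (j = 1 ∧ a + b < en n)) (p : MPoly n)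
    (hp : p ∈ Ideal.span (FF n)) : ¬ IsHT (degLexLe n) p (mon3 n j a b) := by
  rintro ⟨h1, h2⟩
  rcases hj with rfl | ⟨rfl, hab⟩
  · refine fn_head (fun s => s = mon3 n 0 a b) p _ h1 rfl (fun s _ h => h) (fn_ideal _ ?_ p hp)
    intro f hf
    obtain ⟨l, r, hf', ⟨y, hy1, hy2, hy3⟩, ⟨z, hz1, hz2, hz3⟩, -⟩ := gen_F n f hf
    refine ⟨l, r, hf', fun w => iff_of_false ?_ ?_⟩
    · intro h
      have := DFunLike.congr_fun h y
      simp [Finsupp.single_apply, hy1.symm, hy2.symm] at this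
      omega
    · intro h
      have := DFunLike.congr_fun h z
      simp [Finsupp.single_apply, hz1.symm, hz2.symm] at this
      omega
  · refine fn_head (Inv a b) p _ h1 (inv_start n a b) (fun s hs h => inv_min n a b s h (h2 s hs))
      (fn_ideal _ ?_ p hp)
    intro f hf
    obtain ⟨l, r, hf', -, -, h⟩ := gen_F n f hf
    exact ⟨l, r, hf', h a b hab⟩

end Mach

namespace Mach

lemma ring_step {R : Type*} [CommRing R] (k : ℕ)
    (s f s' f' q1 q2 q3 q4 b1 b2 b3 b4 c1 c2 c3 c4 b c : R)
    (h1 : c1 * s' = c1 * f' * b1 ^ (k+1)) (h2 : c2 * s' = c2 * f' * b2 ^ (k+1))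
    (h3 : c3 * s' = c3 * f' * b3 ^ (k+1)) (h4 : c4 * s' = c4 * f' * b4 ^ (k+1))
    (r1 : q1 * c1 * s' = s) (r2 : q2 * c2 * s' = q1 * b1 * c1 * f')
    (r3 : q3 * c3 * f' = q2 * c2 * f') (r4 : q3 * b1 * c3 * s' = q2 * b4 * c2 * s')
    (r5 : q4 * b4 * c4 * f' = q3 * c3 * s') (r6 : q4 * c4 * s' = f)
    (r7 : q2 * b3 * b * c * f' = q2 * b2 * c * f') :
    c * s = c * f * b ^ ((k+1) * (k+1)) := by
  have t : ∀ j, q2 * c * f' * b2 ^ j = q2 * c * f' * (b3 * b) ^ j := by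
    intro j
    induction j with
    | zero => simp
    | succ j ih =>
      calc q2 * c * f' * b2 ^ (j+1) = b2 * (q2 * c * f' * b2 ^ j) := by ring
        _ = b2 * (q2 * c * f' * (b3 * b) ^ j) := by rw [ih]
        _ = (q2 * b2 * c * f') * (b3 * b) ^ j := by ring
        _ = q2 * c * f' * (b3 * b) ^ (j+1) := by rw [← r7]; ring
  have star : q2 * c2 * s' * c = q3 * c3 * s' * c * b ^ (k+1) := by
    calc q2 * c2 * s' * c = q2 * c * (c2 * s') := by ring
      _ = c2 * (q2 * c * f' * b2 ^ (k+1)) := by rw [h2]; ring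
      _ = (q2 * c2 * f') * c * (b3 * b) ^ (k+1) := by rw [t]; ring
      _ = q3 * (c3 * f' * b3 ^ (k+1)) * c * b ^ (k+1) := by rw [← r3]; ring
      _ = q3 * c3 * s' * c * b ^ (k+1) := by rw [← h3]; ring
  have loop : ∀ j, b1 ^ j * (q2 * c2 * s' * c) = b4 ^ j * b ^ ((k+1)*j) * (q2 * c2 * s' * c) := by
    intro j
    induction j with
    | zero => simp
    | succ j ih =>
      calc b1 ^ (j+1) * (q2 * c2 * s' * c) = b1 * (b1 ^ j * (q2 * c2 * s' * c)) := by ring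
        _ = b1 * (b4 ^ j * b ^ ((k+1)*j) * (q3 * c3 * s' * c * b ^ (k+1))) := by rw [ih, star]
        _ = (q3 * b1 * c3 * s') * (b4 ^ j * b ^ ((k+1)*j) * c * b ^ (k+1)) := by ring
        _ = b4 ^ (j+1) * b ^ ((k+1)*(j+1)) * (q2 * c2 * s' * c) := by rw [r4]; ring
  calc c * s = c * q1 * (c1 * s') := by rw [← r1]; ring
    _ = b1 ^ k * ((q1 * b1 * c1 * f') * c) := by rw [h1]; ring
    _ = b1 ^ k * (q2 * c2 * s' * c) := by rw [← r2]
    _ = b4 ^ k * b ^ ((k+1)*k) * (q3 * c3 * s' * c * b ^ (k+1)) := by rw [loop, star]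
    _ = b4 ^ k * b ^ ((k+1)*k) * ((q4 * b4 * c4 * f') * c * b ^ (k+1)) := by rw [r5]
    _ = q4 * (c4 * f' * b4 ^ (k+1)) * c * b ^ ((k+1)*(k+1)) := by ring
    _ = c * f * b ^ ((k+1)*(k+1)) := by rw [← h4, ← r6]; ring

lemma quot_eq {n : ℕ} {a b : MPoly n} (h : a + b ∈ FF n) :
    Ideal.Quotient.mk (Ideal.span (FF n)) a = Ideal.Quotient.mk (Ideal.span (FF n)) b := by
  rw [Ideal.Quotient.eq, CharTwo.sub_eq_add]
  exact Ideal.subset_span h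

/-- the image of a variable in the quotient ring -/
noncomputable def qv (n : ℕ) (y : MVar n) : MPoly n ⧸ Ideal.span (FF n) :=
  Ideal.Quotient.mk (Ideal.span (FF n)) (X y)

lemma P_mem (n : ℕ) (bar : Bool) : PP n bar ⊆ FF n := by
  intro p hp
  cases bar
  · exact Or.inl (Or.inl hp)
  · exact Or.inl (Or.inr hp)

lemma quot_level (n : ℕ) (bar : Bool) (m : ℕ) : ∀ (hm : m < n + 1) (j : Fin 4),
    qv n (vC bar j ⟨m, hm⟩) * qv n (vS bar ⟨m, hm⟩)
      = qv n (vC bar j ⟨m, hm⟩) * qv n (vF bar ⟨m, hm⟩) * qv n (vB bar j ⟨m, hm⟩) ^ en m := by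
  induction m with
  | zero =>
    intro hm j
    have h := quot_eq (P_mem n bar (Or.inl ⟨j, rfl⟩))
    simp only [map_mul, map_pow] at h
    have e : en 0 = 2 := rfl
    rw [e]
    change qv n (vC bar j 0) * qv n (vS bar 0)
      = qv n (vC bar j 0) * qv n (vF bar 0) * qv n (vB bar j 0) ^ 2
    unfold qv
    rw [← h]; ring
  | succ m ih =>
    intro hm j
    have hm' : m < n := by omega
    have ih' := ih (by omega)
    have hs : ∀ p ∈ Pm n bar ⟨m, hm'⟩, p ∈ FF n := fun p hp =>
      P_mem n bar (Or.inr (Set.mem_iUnion.2 ⟨⟨m, hm'⟩, hp⟩))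
    obtain ⟨k, hk⟩ : ∃ k, en m = k + 1 := ⟨en m - 1, by
      have : 0 < en m := by unfold en; positivity
      omega⟩
    rw [en_succ, hk]
    rw [hk] at ih'
    have g1 := quot_eq (hs _ (Or.inl (Or.inl rfl)))
    have g2 := quot_eq (hs _ (Or.inl (Or.inr (Or.inl rfl))))
    have g3 := quot_eq (hs _ (Or.inl (Or.inr (Or.inr (Or.inl rfl)))))
    have g4 := quot_eq (hs _ (Or.inl (Or.inr (Or.inr (Or.inr (Or.inl rfl))))))
    have g5 := quot_eq (hs _ (Or.inl (Or.inr (Or.inr (Or.inr (Or.inr (Or.inl rfl)))))))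
    have g6 := quot_eq (hs _ (Or.inl (Or.inr (Or.inr (Or.inr (Or.inr (Or.inr rfl)))))))
    have g7 := quot_eq (hs _ (Or.inr ⟨j, rfl⟩))
    simp only [map_mul] at g1 g2 g3 g4 g5 g6 g7
    exact ring_step k _ _ _ _ _ _ _ _ _ _ _ _ _ _ _ _ _ _ (ih' 0) (ih' 1) (ih' 2) (ih' 3)
      g1 g2 g3 g4 g5 g6 g7

lemma pow_swap {R : Type*} [CommRing R] (z x y : R) (h : x * z = y * z) (j : ℕ) :
    x ^ j * z = y ^ j * z := by
  induction j with
  | zero => simp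
  | succ j ih =>
    calc x ^ (j+1) * z = x ^ j * (x * z) := by ring
      _ = y * (x ^ j * z) := by rw [h]; ring
      _ = y ^ (j+1) * z := by rw [ih]; ring

lemma ring_top {R : Type*} [CommRing R] (m1 m2 : ℕ)
    (s l c cb b bb c4 b4 f4 s4 c4' b4' f4' s4' : R)
    (h : c4 * s4 = c4 * f4 * b4 ^ (m1 + m2)) (h' : c4' * s4' = c4' * f4' * b4' ^ (m1 + m2))
    (r1 : b4 * l * b = l * c) (r2 : b4 * l * bb = l * cb) (r3 : c4 * f4 = l)
    (r4 : c4' * f4' = c4 * s4) (r5 : b4' * c4 * s4 = c4 * s4 * b)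
    (r6 : b4' * c4 * s4 = c4 * s4 * bb) (r7 : c4' * s4' = s) :
    l * cb ^ m1 * c ^ m2 = s := by
  have e1 := pow_swap l (b4 * b) c (by linear_combination r1) m2
  have e2 := pow_swap l (b4 * bb) cb (by linear_combination r2) m1
  have e3 := pow_swap (c4 * s4) b4' b (by linear_combination r5) m2
  have e4 := pow_swap (c4 * s4) b4' bb (by linear_combination r6) m1
  calc l * cb ^ m1 * c ^ m2 = (cb ^ m1 * l) * c ^ m2 := by ring
    _ = (b4 * bb) ^ m1 * (c ^ m2 * l) := by rw [← e2]; ring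
    _ = (l * b4 ^ (m1 + m2)) * b ^ m2 * bb ^ m1 := by rw [← e1]; ring
    _ = (b ^ m2 * (c4 * s4)) * bb ^ m1 := by rw [← r3, ← h]; ring
    _ = b4' ^ m2 * (bb ^ m1 * (c4 * s4)) := by rw [← e3]; ring
    _ = c4 * s4 * b4' ^ (m1 + m2) := by rw [← e4]; ring
    _ = s := by rw [← r4, ← h', r7]

lemma top_mem (n m1 m2 : ℕ) (hm : m1 + m2 = en n) :
    (monomial (mon3 n 1 m1 m2) 1 + X vs : MPoly n) ∈ Ideal.span (FF n) := by
  have hs : ∀ p ∈ GG n, p ∈ FF n := fun p hp => Or.inr hp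
  have g1 := quot_eq (hs _ (Or.inl rfl))
  have g2 := quot_eq (hs _ (Or.inr (Or.inl rfl)))
  have g3 := quot_eq (hs _ (Or.inr (Or.inr (Or.inl rfl))))
  have g4 := quot_eq (hs _ (Or.inr (Or.inr (Or.inr (Or.inl rfl)))))
  have g5 := quot_eq (hs _ (Or.inr (Or.inr (Or.inr (Or.inr (Or.inl rfl))))))
  have g6 := quot_eq (hs _ (Or.inr (Or.inr (Or.inr (Or.inr (Or.inr (Or.inl rfl)))))))
  have g7 := quot_eq (hs _ (Or.inr (Or.inr (Or.inr (Or.inr (Or.inr (Or.inr rfl)))))))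
  simp only [map_mul] at g1 g2 g3 g4 g5 g6 g7
  have h := quot_level n false n (by omega) 3
  have h' := quot_level n true n (by omega) 3
  rw [← hm] at h h'
  have key := ring_top m1 m2 _ _ _ _ _ _ _ _ _ _ _ _ _ _ h h' g1 g2 g3 g4 g5 g6 g7
  have e : (monomial (mon3 n 1 m1 m2) 1 : MPoly n) = X vl * X vcb ^ m1 * X vc ^ m2 := by
    rw [X_pow_eq_monomial, X_pow_eq_monomial]
    simp only [X, monomial_mul, mul_one]
  rw [← CharTwo.sub_eq_add, ← Ideal.Quotient.eq, e]
  simp only [map_mul, map_pow]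
  exact key

lemma le_mon3 {n : ℕ} {t : Mon (MVar n)} {j a b : ℕ} (h : t ≤ mon3 n j a b) :
    t = mon3 n (t vl) (t vcb) (t vc) := by
  ext y
  have := h y
  cases y <;> simp_all

lemma exists_head (n : ℕ) (G : Finset (MPoly n))
    (hG : IsReducedGB (degLexLe n) G (Ideal.span (FF n))) (m1 m2 : ℕ) (hm : m1 + m2 = en n) :
    ∃ g ∈ G, IsHT (degLexLe n) g (mon3 n 1 m1 m2) := by
  obtain ⟨⟨hsub, -, hht⟩, -⟩ := hG
  have hen : 0 < en n := by unfold en; positivity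
  have hne : mon3 n 1 m1 m2 ≠ Finsupp.single vs 1 := by
    intro h
    have := DFunLike.congr_fun h vl
    simp at this
  have hin : mon3 n 1 m1 m2 ∈ (monomial (mon3 n 1 m1 m2) 1 + X vs : MPoly n).support := by
    simp [mem_support_iff, X, coeff_monomial, hne.symm]
  have hHT : IsHT (degLexLe n) (monomial (mon3 n 1 m1 m2) 1 + X vs : MPoly n)
      (mon3 n 1 m1 m2) := by
    refine ⟨hin, fun u hu => ?_⟩
    classical
    have := support_add hu
    rw [Finset.mem_union] at this
    rcases this with h | h
    · have := Finset.mem_singleton.1 (support_monomial_subset h)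
      rw [this]
      exact Or.inr ⟨rfl, Or.inl rfl⟩
    · have := Finset.mem_singleton.1 (support_monomial_subset h)
      rw [this]
      left
      simp only [mdeg_add, mdeg_single]
      omega
  have hmem : (monomial (mon3 n 1 m1 m2) 1 : MPoly n) ∈
      Ideal.span (HTset (degLexLe n) (↑G : Set (MPoly n))) := by
    rw [← hht]
    refine Ideal.subset_span ⟨_, top_mem n m1 m2 hm, ?_, _, hHT, rfl⟩
    intro h
    rw [h] at hin
    simp at hin
  have himg : HTset (degLexLe n) (↑G : Set (MPoly n)) =
      (fun s => (monomial s 1 : MPoly n)) '' {t | ∃ f ∈ G, f ≠ 0 ∧ IsHT (degLexLe n) f t} := by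
    ext p
    constructor
    · rintro ⟨f, hf, h0, t, ht, rfl⟩
      exact ⟨t, ⟨f, hf, h0, ht⟩, rfl⟩
    · rintro ⟨t, ⟨f, hf, h0, ht⟩, rfl⟩
      exact ⟨f, hf, h0, t, ht, rfl⟩
  rw [himg, mem_ideal_span_monomial_image] at hmem
  obtain ⟨t, ⟨g, hg, -, ht⟩, hle⟩ := hmem (mon3 n 1 m1 m2) (by simp [mem_support_iff])
  refine ⟨g, hg, ?_⟩
  have e := le_mon3 hle
  have hl := hle vl
  have ha := hle vcb
  have hb := hle vc
  simp at hl ha hb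
  by_cases hc : t vl = 1 ∧ t vcb = m1 ∧ t vc = m2
  · rw [hc.1, hc.2.1, hc.2.2] at e
    rwa [← e]
  · exfalso
    rw [e] at ht
    refine not_head n _ _ _ ?_ g (hsub hg) ht
    omega

lemma head_inj (n a a' b b' : ℕ) (haa : a < a')
    (h : degLexLe n (mon3 n 1 a' b') (mon3 n 1 a b)) (hd : a + b = a' + b') : False := by
  rcases h with h | ⟨-, h | ⟨x, hx, hy⟩⟩
  · simp only [mdeg_add, mdeg_single] at h
    omega
  · have := DFunLike.congr_fun h vcb
    simp at this
    omega
  · by_cases hr : vrank n x < 2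
    · have := hy vcb hr
      simp at this
      omega
    · cases x <;> simp [vrank] at hx hr
      omega

end Mach

/-- Every reduced Gröbner basis `G` of `⟨𝓕⟩` with respect to the degree
lexicographic order `≼_deg` satisfies `|G| ≥ 2^(2^n)` and
`|{p ∈ G : deg p ≥ 2^(2^n)}| ≥ 2^(2^n)`. -/
theorem stmt17 (n : ℕ) (G : Finset (MPoly n))
    (hG : IsReducedGB (degLexLe n) G (Ideal.span (FF n))) :
    en n ≤ G.card ∧ en n ≤ (G.filter fun p => en n ≤ p.totalDegree).card := by
  have key : ∀ m : ℕ, ∃ g : MPoly n, m < en n →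
      g ∈ G ∧ IsHT (degLexLe n) g (Mach.mon3 n 1 m (en n - m)) := by
    intro m
    by_cases h : m < en n
    · obtain ⟨g, h1, h2⟩ := Mach.exists_head n G hG m (en n - m) (by omega)
      exact ⟨g, fun _ => ⟨h1, h2⟩⟩
    · exact ⟨0, fun h' => absurd h' h⟩
  choose φ hφ using key
  have main : en n ≤ (G.filter fun p => en n ≤ p.totalDegree).card := by
    have := Finset.card_le_card_of_injOn (s := Finset.range (en n))
      (t := G.filter fun p => en n ≤ p.totalDegree) φ ?_ ?_
    · simpa using this
    · intro m hm
      have hm' : m < en n := by simpa using hm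
      obtain ⟨h1, h2, -⟩ := hφ m hm'
      have h3 := le_totalDegree h2
      have h4 : mdeg (Mach.mon3 n 1 m (en n - m)) = 1 + m + (en n - m) := by
        simp only [Mach.mdeg_add, Mach.mdeg_single]
      unfold mdeg at h4
      simp only [Finset.coe_filter, Set.mem_ofPred_eq]
      refine ⟨h1, ?_⟩
      have h5 : en n ≤ 1 + m + (en n - m) := by omega
      exact h5.trans (h4 ▸ h3)
    · intro a ha a' ha' he
      have ha2 : a < en n := by simpa using ha
      have ha3 : a' < en n := by simpa using ha'
      obtain ⟨-, h1, h2⟩ := hφ a ha2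
      obtain ⟨-, h3, h4⟩ := hφ a' ha3
      rw [← he] at h3 h4
      rcases lt_trichotomy a a' with h | h | h
      · exact (Mach.head_inj n a a' _ _ h (h2 _ h3) (by omega)).elim
      · exact h
      · exact (Mach.head_inj n a' a _ _ h (h4 _ h1) (by omega)).elim
  exact ⟨main.trans (Finset.card_filter_le _ _), main⟩
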